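/- Let 0 < γ < L and λ ∈ (0, 1). Set r := √(1 − (γ/L)²) and 𝒯 := (1/(L·r)) · artanh( r(1−λ) / ( 2(λ/(λ+1))(γ/L − 1) + 1 + λ ) ). Then the argument of artanh lies in (0, 1), so 𝒯 is a well-defined positive real number, and if φ : [0, 𝒯] → ℝ is differentiable with φ(0) = 1/λ and φ'(τ) = −2Lφ(τ) − γ(φ(τ)² + 1) for all τ ∈ [0, 𝒯], then λ ≤ φ(τ) ≤ 1/λ for all τ ∈ [0, 𝒯]. -/

import Mathlib

/-- The inverse hyperbolic tangent, `artanh x = (1/2)·log((1+x)/(1-x))`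
(this Mathlib version does not provide it). -/
noncomputable def artanh (x : ℝ) : ℝ := 1 / 2 * Real.log ((1 + x) / (1 - x))

/-- **The Riccati clock stays in `[λ, 1/λ]` on `[0, 𝒯]`, case `γ < L`.**
With `r = √(1 - (γ/L)²)` and
`A = r(1-λ) / (2(λ/(λ+1))(γ/L - 1) + 1 + λ)`, the argument `A` of `artanh`
lies in `(0,1)`, so `𝒯 = (1/(L·r))·artanh A` is a well-defined positive real
number, and any solution of `φ' = -2Lφ - γ(φ² + 1)` with `φ(0) = 1/λ`
satisfies `λ ≤ φ(τ) ≤ 1/λ` for all `τ ∈ [0, 𝒯]`. -/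
theorem riccati_clock_bounds_gamma_lt_L
    (L γ lam : ℝ) (hL : 0 < γ) (hγ : γ < L) (hlam0 : 0 < lam) (hlam1 : lam < 1)
    (r A T : ℝ)
    (hr : r = Real.sqrt (1 - (γ / L) ^ 2))
    (hA : A = r * (1 - lam) / (2 * (lam / (lam + 1)) * (γ / L - 1) + 1 + lam))
    (hT : T = 1 / (L * r) * artanh A)
    (φ : ℝ → ℝ) (hφ0 : φ 0 = 1 / lam)
    (hderiv : ∀ τ ∈ Set.Icc (0 : ℝ) T,
      HasDerivWithinAt φ (-2 * L * φ τ - γ * ((φ τ) ^ 2 + 1)) (Set.Icc (0 : ℝ) T) τ) :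
    (0 < A ∧ A < 1) ∧ 0 < T ∧
      ∀ τ ∈ Set.Icc (0 : ℝ) T, lam ≤ φ τ ∧ φ τ ≤ 1 / lam := by
  have hLp : 0 < L := hL.trans hγ
  obtain ⟨g, hg⟩ : ∃ g, g = γ / L := ⟨_, rfl⟩
  have hgL : γ = g * L := by rw [hg]; field_simp
  have hg0 : 0 < g := by rw [hg]; positivity
  have hg1 : g < 1 := by rw [hg, div_lt_one hLp]; exact hγ
  rw [← hg] at hr hA
  have hr0 : 0 < r := by rw [hr]; apply Real.sqrt_pos.mpr; nlinarith
  have hr2 : r ^ 2 = 1 - g ^ 2 := by rw [hr]; apply Real.sq_sqrt; nlinarith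
  have hr1 : r < 1 := by nlinarith
  have hD : 0 < 2 * lam * g + 1 + lam ^ 2 := by positivity
  have hA' : A = r * (1 - lam ^ 2) / (2 * lam * g + 1 + lam ^ 2) := by
    have h1 : 2 * (lam / (lam + 1)) * (g - 1) + 1 + lam
        = (2 * lam * g + 1 + lam ^ 2) / (lam + 1) := by
      field_simp; ring
    rw [hA, h1]
    field_simp
    ring
  have hA0 : 0 < A := by
    rw [hA']; apply div_pos _ hD
    apply mul_pos hr0; nlinarith
  have hA1 : A < 1 := by
    rw [hA', div_lt_one hD]
    nlinarith [mul_pos hlam0 hg0, mul_pos hlam0 hlam0]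
  have hq : 1 < (1 + A) / (1 - A) := by
    rw [lt_div_iff₀ (by linarith)]; linarith
  have hT0 : 0 < T := by
    rw [hT, artanh]
    have := Real.log_pos hq
    positivity
  refine ⟨⟨hA0, hA1⟩, hT0, ?_⟩
  have hET : Real.exp (-(2 * L * r) * T) = (1 - A) / (1 + A) := by
    have : -(2 * L * r) * T = -Real.log ((1 + A) / (1 - A)) := by
      rw [hT, artanh]; field_simp
    rw [this, Real.exp_neg, Real.exp_log (by linarith), inv_div]
  obtain ⟨p0, hp0⟩ : ∃ p0, p0 = g / lam + 1 - r := ⟨_, rfl⟩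
  obtain ⟨q0, hq0⟩ : ∃ q0, q0 = g / lam + 1 + r := ⟨_, rfl⟩
  have hgl : 0 < g / lam := by positivity
  have hp0p : 0 < p0 := by rw [hp0]; linarith
  have hpq : p0 < q0 := by rw [hp0, hq0]; linarith
  let u : ℝ → ℝ := fun t => q0 * (g * φ t + 1 - r)
    - p0 * Real.exp (-(2 * L * r) * t) * (g * φ t + 1 + r)
  have hud : ∀ t ∈ Set.Icc (0 : ℝ) T,
      HasDerivWithinAt u (-(L * (g * φ t + 1 + r)) * u t) (Set.Icc (0 : ℝ) T) t := by
    intro t ht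
    have h1 := hderiv t ht
    have h2 : HasDerivWithinAt (fun t => Real.exp (-(2 * L * r) * t))
        (Real.exp (-(2 * L * r) * t) * (-(2 * L * r) * 1)) (Set.Icc (0 : ℝ) T) t :=
      (((hasDerivAt_id t).const_mul (-(2 * L * r))).exp).hasDerivWithinAt
    have h3 := ((((h1.const_mul g).add_const 1).sub_const r).const_mul q0).sub
      ((h2.const_mul p0).mul (((h1.const_mul g).add_const 1).add_const r))
    refine h3.congr_deriv ?_
    simp only [u]
    rw [hgL]
    generalize Real.exp (-(2 * L * r) * t) = E
    have hg2 : g ^ 2 = 1 - r ^ 2 := by linarith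
    linear_combination (-L * q0 + L * p0 * E) * hg2
  have hφc : ContinuousOn φ (Set.Icc 0 T) := fun t ht => (hderiv t ht).continuousWithinAt
  have huc : ContinuousOn u (Set.Icc 0 T) := fun t ht => (hud t ht).continuousWithinAt
  obtain ⟨M, hM⟩ := isCompact_Icc.exists_bound_of_continuousOn hφc
  have hM0 : 0 ≤ M := (norm_nonneg _).trans (hM 0 ⟨le_rfl, hT0.le⟩)
  have hu0 : u 0 = 0 := by
    simp only [u, hφ0, hp0, hq0]; simp; ring
  have huz : ∀ t ∈ Set.Icc (0 : ℝ) T, u t = 0 := by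
    intro t ht
    have := norm_le_gronwallBound_of_norm_deriv_right_le (f := u)
      (f' := fun t => -(L * (g * φ t + 1 + r)) * u t) (δ := 0) (K := L * (g * M + 1 + r))
      (ε := 0) (a := 0) (b := T) huc
      (fun x hx => (hud x ⟨hx.1, hx.2.le⟩).mono_of_mem_nhdsWithin
        (Icc_mem_nhdsGE_of_mem hx)) (by rw [hu0]; simp) (by
        intro x hx
        rw [add_zero, norm_mul]
        apply mul_le_mul_of_nonneg_right _ (norm_nonneg _)
        have hb := hM x ⟨hx.1, hx.2.le⟩
        rw [Real.norm_eq_abs, abs_le] at hb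
        rw [norm_neg, norm_mul, Real.norm_eq_abs, abs_of_pos hLp]
        apply mul_le_mul_of_nonneg_left _ hLp.le
        rw [Real.norm_eq_abs, abs_le]
        constructor <;> nlinarith) t ht
    rw [gronwallBound_ε0_δ0] at this
    exact norm_le_zero_iff.mp this
  intro t ht
  have hu := huz t ht
  simp only [u] at hu
  have hE1 : Real.exp (-(2 * L * r) * t) ≤ 1 := by
    rw [Real.exp_le_one_iff]
    have : 0 ≤ 2 * L * r * t := by have := ht.1; positivity
    linarith
  have hE2 : (1 - A) / (1 + A) ≤ Real.exp (-(2 * L * r) * t) := by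
    rw [← hET, Real.exp_le_exp]
    have : 2 * L * r * t ≤ 2 * L * r * T := mul_le_mul_of_nonneg_left ht.2 (by positivity)
    linarith
  generalize Real.exp (-(2 * L * r) * t) = E at hu hE1 hE2
  have hden : 0 < q0 - p0 * E := by nlinarith
  constructor
  · have hkey : p0 * (g * lam + 1 + r) * (1 - A) = q0 * (g * lam + 1 - r) * (1 + A) := by
      have : A * (2 * lam * g + 1 + lam ^ 2) = r * (1 - lam ^ 2) := by
        rw [hA']; field_simp
      have hk : g / lam * lam = g := by field_simp
      rw [hp0, hq0]
      generalize g / lam = k at hk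
      linear_combination (-2 * k) * this + 2 * A * hr2
        + (2 * r * lam + A * (2 * g + 2 * lam)) * hk
    have hE3 : q0 * (g * lam + 1 - r) ≤ p0 * (g * lam + 1 + r) * E := by
      have : q0 * (g * lam + 1 - r) = p0 * (g * lam + 1 + r) * ((1 - A) / (1 + A)) := by
        rw [mul_div_assoc', eq_div_iff (by linarith), hkey]
      rw [this]
      exact mul_le_mul_of_nonneg_left hE2 (by positivity)
    have h : 0 ≤ (g * (q0 - p0 * E)) * (φ t - lam) := by linarith
    have := nonneg_of_mul_nonneg_right h (by positivity)
    linarith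
  · have h : 0 ≤ (g * (q0 - p0 * E)) * (1 / lam - φ t) := by
      have h1 : (g * (q0 - p0 * E)) * (1 / lam - φ t) = p0 * q0 * (1 - E) := by
        have h2 : g * (1 / lam) = q0 - 1 - r := by rw [hq0]; ring
        have h3 : p0 = q0 - 2 * r := by rw [hp0, hq0]; ring
        linear_combination (q0 - p0 * E) * h2 - hu - q0 * h3
      rw [h1]
      have : 0 < q0 := hp0p.trans hpq
      have : 0 ≤ 1 - E := by linarith
      positivity
    have := nonneg_of_mul_nonneg_right h (by positivity)
    linarith
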